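/- arXiv:2404.19233 — 2 statements merged into one kernel-verified Lean document; each statement's English description precedes it below -/
import Mathlib

section
/- For every positive integer n, there exists a red/blue coloring of n-dimensional Euclidean space E^n such that there are no four red points x_1, x_2, x_3, x_4 with x_1 + x_2 = x_3 + x_4 and (‖x_1 − x_2‖² − ‖x_3 − x_4‖²)/2 = 3, and there is no blue congruent copy of ℓ_19 (i.e., E^n ↛ (P_3, ℓ_19)). -/
/-!
Colour `x` red when `4‖x‖²` lies in `[0, 6)` modulo `25`.

If `x₁ + x₂ = x₃ + x₄`, the parallelogram law gives
`‖x₁‖² + ‖x₂‖² - ‖x₃‖² - ‖x₄‖² = (‖x₁ - x₂‖² - ‖x₃ - x₄‖²) / 2`. For a red member of `P_3` the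
left side, multiplied by `4`, would be congruent modulo `25` to a number in `(-12, 12)`, while the
right side becomes `12`; but no number congruent to `12` modulo `25` lies strictly between `-12`
and `12`.

Along a line with unit direction, `4‖x + k v‖² = 4k² + bk + c` for real `b` and `c`, so a blue
`ℓ_19` is excluded once, for every real `b`, the points `4k² + bk`, `k < 19`, on the circle
`ℝ / 25ℤ` leave no gap longer than `6` (`hits_all`). Changing `b` by a multiple of `25` does not
matter, so `b` ranges over `[0, 25)`. This interval is cut into pieces, and for each piece there is
one closed walk through the indices `k` whose lifted values `4k² + bk + 25z` rise by at most `6` at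
every step and by `25` in total (`hits_of_walk`). Each step condition is
affine in `b`, so it holds on a piece as soon as it holds at both ends. A walk of this kind cannot
jump over any translate of `[0, 6)`.
-/

/-- A real sequence that rises by at most `6` at each step, starting below `0` and ending at or
above `0`, visits `[0, 6)`. -/
theorem exists_mem_of_isChain {α : Type*} (f : α → ℝ) (l : List α) (a : α)
    (hc : List.IsChain (fun p q => f q ≤ f p + 6) (a :: l)) (ha : f a < 0)
    (hlast : 0 ≤ f ((a :: l).getLast (List.cons_ne_nil a l))) :
    ∃ p ∈ a :: l, 0 ≤ f p ∧ f p < 6 := by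
  induction l generalizing a with
  | nil =>
    simp only [List.getLast_singleton] at hlast
    linarith
  | cons b l ih =>
    rw [List.isChain_cons_cons] at hc
    by_cases hb : f b < 0
    · obtain ⟨p, hp, h⟩ := ih b hc.2 hb (by simpa using hlast)
      exact ⟨p, List.mem_cons_of_mem _ hp, h⟩
    · exact ⟨b, by simp, not_lt.mp hb, by linarith [hc.1]⟩

/-- Every translate of the points `4k² + bk`, `k < 19`, meets `[0, 6)` modulo `25`. -/
def Hits (b : ℝ) : Prop :=
  ∀ c : ℝ, ∃ k : ℕ, k < 19 ∧ ∃ z : ℤ,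
    0 ≤ 4 * (k : ℝ) ^ 2 + b * k + c + 25 * z ∧ 4 * (k : ℝ) ^ 2 + b * k + c + 25 * z < 6

/-- The lift of `4k² + bk` modulo `25` described by the pair `(k, z)`. -/
def lift25 (b : ℝ) (p : ℕ × ℤ) : ℝ := 4 * (p.1 : ℝ) ^ 2 + b * p.1 + 25 * p.2

/-- A walk from `(k₀, 0)` to `(k₀, 1)` whose steps rise by at most `6` certifies that the points
`4k² + bk` leave no gap longer than `6` modulo `25`. -/
theorem hits_of_walk (b : ℝ) (k₀ : ℕ) (l : List (ℕ × ℤ))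
    (hk : ∀ p ∈ (k₀, (0 : ℤ)) :: l, p.1 < 19)
    (hlast : ((k₀, (0 : ℤ)) :: l).getLast (List.cons_ne_nil _ _) = (k₀, 1))
    (hc : List.IsChain (fun p q => lift25 b q ≤ lift25 b p + 6) ((k₀, (0 : ℤ)) :: l)) :
    Hits b := by
  intro c
  -- `z` is the integer placing the start of the walk, shifted by `c + 25 z`, in `[-25, 0)`.
  set z : ℤ := -⌊(4 * (k₀ : ℝ) ^ 2 + b * k₀ + c) / 25⌋ - 1 with hz
  have h1 := Int.floor_le ((4 * (k₀ : ℝ) ^ 2 + b * k₀ + c) / 25)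
  have h2 := Int.lt_floor_add_one ((4 * (k₀ : ℝ) ^ 2 + b * k₀ + c) / 25)
  have hzr : (z : ℝ) = -⌊(4 * (k₀ : ℝ) ^ 2 + b * k₀ + c) / 25⌋ - 1 := by
    rw [hz]; push_cast; ring
  obtain ⟨p, hp, hp0, hp6⟩ := exists_mem_of_isChain (fun p => lift25 b p + (c + 25 * z)) l (k₀, 0)
    (hc.imp fun p q h => by linarith)
    (by simp only [lift25]; push_cast; linarith)
    (by simp only [hlast, lift25]; push_cast; linarith)
  refine ⟨p.1, hk p hp, p.2 + z, ?_, ?_⟩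
  · simp only [lift25] at hp0
    push_cast
    linarith
  · simp only [lift25] at hp6
    push_cast
    linarith

set_option maxHeartbeats 2000000 in
/-- On each piece of `[0, 25]` a single walk works; the interior breakpoints are values of `b` at
which some step of a walk rises by exactly `6`. -/
theorem hits_of_mem_Icc (b : ℝ) (h0 : 0 ≤ b) (h25 : b ≤ 25) : Hits b := by
  rcases le_total b (3/4) with hu | h0
  · refine hits_of_walk b 2 [(6, -5), (5, -3), (10, -15), (8, -9), (3, 0), (2, 1)]
      (by decide) rfl ?_
    simp only [List.isChain_cons_cons, List.isChain_singleton, lift25, and_true]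
    push_cast
    refine ⟨?_, ?_, ?_, ?_, ?_, ?_⟩ <;> linarith
  rcases le_total b (7/4) with hu | h0
  · refine hits_of_walk b 5 [(9, -9), (10, -12), (12, -19), (15, -32), (11, -15), (14, -27), (6, -1), (5, 1)]
      (by decide) rfl ?_
    simp only [List.isChain_cons_cons, List.isChain_singleton, lift25, and_true]
    push_cast
    refine ⟨?_, ?_, ?_, ?_, ?_, ?_, ?_, ?_⟩ <;> linarith
  rcases le_total b (11/4) with hu | h0
  · refine hits_of_walk b 8 [(12, -13), (13, -17), (15, -26), (18, -42), (14, -21), (17, -36), (9, -2), (8, 1)]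
      (by decide) rfl ?_
    simp only [List.isChain_cons_cons, List.isChain_singleton, lift25, and_true]
    push_cast
    refine ⟨?_, ?_, ?_, ?_, ?_, ?_, ?_, ?_⟩ <;> linarith
  rcases le_total b (16/5) with hu | h0
  · refine hits_of_walk b 1 [(6, -6), (11, -20), (16, -42), (9, -13), (8, -10), (1, 1)]
      (by decide) rfl ?_
    simp only [List.isChain_cons_cons, List.isChain_singleton, lift25, and_true]
    push_cast
    refine ⟨?_, ?_, ?_, ?_, ?_, ?_⟩ <;> linarith
  rcases le_total b (25/7) with hu | h0
  · refine hits_of_walk b 5 [(11, -16), (15, -33), (9, -9), (10, -12), (17, -43), (5, 1)]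
      (by decide) rfl ?_
    simp only [List.isChain_cons_cons, List.isChain_singleton, lift25, and_true]
    push_cast
    refine ⟨?_, ?_, ?_, ?_, ?_, ?_⟩ <;> linarith
  rcases le_total b (9/2) with hu | h0
  · refine hits_of_walk b 1 [(9, -14), (8, -11), (6, -6), (5, -4), (7, -8), (11, -20), (4, -2), (1, 1)]
      (by decide) rfl ?_
    simp only [List.isChain_cons_cons, List.isChain_singleton, lift25, and_true]
    push_cast
    refine ⟨?_, ?_, ?_, ?_, ?_, ?_, ?_, ?_⟩ <;> linarith
  rcases le_total b (11/2) with hu | h0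
  · refine hits_of_walk b 4 [(12, -22), (11, -18), (9, -11), (8, -8), (10, -14), (14, -30), (7, -5), (4, 1)]
      (by decide) rfl ?_
    simp only [List.isChain_cons_cons, List.isChain_singleton, lift25, and_true]
    push_cast
    refine ⟨?_, ?_, ?_, ?_, ?_, ?_, ?_, ?_⟩ <;> linarith
  rcases le_total b (13/2) with hu | h0
  · refine hits_of_walk b 7 [(15, -30), (14, -25), (12, -16), (11, -12), (13, -20), (17, -40), (10, -8), (7, 1)]
      (by decide) rfl ?_
    simp only [List.isChain_cons_cons, List.isChain_singleton, lift25, and_true]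
    push_cast
    refine ⟨?_, ?_, ?_, ?_, ?_, ?_, ?_, ?_⟩ <;> linarith
  rcases le_total b (29/4) with hu | h0
  · refine hits_of_walk b 7 [(18, -47), (17, -41), (15, -30), (14, -25), (11, -12), (9, -5), (13, -20), (7, 1)]
      (by decide) rfl ?_
    simp only [List.isChain_cons_cons, List.isChain_singleton, lift25, and_true]
    push_cast
    refine ⟨?_, ?_, ?_, ?_, ?_, ?_, ?_, ?_⟩ <;> linarith
  rcases le_total b (15/2) with hu | h0
  · refine hits_of_walk b 0 [(2, -1), (3, -2), (6, -7), (4, -3), (7, -9), (0, 1)]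
      (by decide) rfl ?_
    simp only [List.isChain_cons_cons, List.isChain_singleton, lift25, and_true]
    push_cast
    refine ⟨?_, ?_, ?_, ?_, ?_, ?_⟩ <;> linarith
  rcases le_total b (60/7) with hu | h0
  · refine hits_of_walk b 0 [(7, -10), (10, -19), (2, -1), (1, 0), (5, -5), (6, -7), (4, -3), (0, 1)]
      (by decide) rfl ?_
    simp only [List.isChain_cons_cons, List.isChain_singleton, lift25, and_true]
    push_cast
    refine ⟨?_, ?_, ?_, ?_, ?_, ?_, ?_, ?_⟩ <;> linarith
  rcases le_total b (67/7) with hu | h0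
  · refine hits_of_walk b 3 [(10, -17), (13, -29), (5, -3), (4, -1), (8, -10), (9, -13), (7, -7), (3, 1)]
      (by decide) rfl ?_
    simp only [List.isChain_cons_cons, List.isChain_singleton, lift25, and_true]
    push_cast
    refine ⟨?_, ?_, ?_, ?_, ?_, ?_, ?_, ?_⟩ <;> linarith
  rcases le_total b (74/7) with hu | h0
  · refine hits_of_walk b 6 [(13, -24), (16, -39), (8, -5), (7, -2), (11, -15), (12, -19), (10, -11), (6, 1)]
      (by decide) rfl ?_
    simp only [List.isChain_cons_cons, List.isChain_singleton, lift25, and_true]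
    push_cast
    refine ⟨?_, ?_, ?_, ?_, ?_, ?_, ?_, ?_⟩ <;> linarith
  rcases le_total b (56/5) with hu | h0
  · refine hits_of_walk b 0 [(5, -6), (10, -20), (15, -42), (13, -32), (9, -16), (0, 1)]
      (by decide) rfl ?_
    simp only [List.isChain_cons_cons, List.isChain_singleton, lift25, and_true]
    push_cast
    refine ⟨?_, ?_, ?_, ?_, ?_, ?_⟩ <;> linarith
  rcases le_total b (12) with hu | h0
  · refine hits_of_walk b 1 [(3, -2), (8, -13), (9, -16), (18, -59), (16, -47), (4, -3), (2, 0), (1, 1)]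
      (by decide) rfl ?_
    simp only [List.isChain_cons_cons, List.isChain_singleton, lift25, and_true]
    push_cast
    refine ⟨?_, ?_, ?_, ?_, ?_, ?_, ?_, ?_⟩ <;> linarith
  rcases le_total b (25/2) with hu | h0
  · refine hits_of_walk b 0 [(8, -14), (9, -17), (4, -4), (6, -8), (3, -2), (0, 1)]
      (by decide) rfl ?_
    simp only [List.isChain_cons_cons, List.isChain_singleton, lift25, and_true]
    push_cast
    refine ⟨?_, ?_, ?_, ?_, ?_, ?_⟩ <;> linarith
  rcases le_total b (27/2) with hu | h0
  · refine hits_of_walk b 3 [(11, -22), (10, -18), (8, -11), (7, -8), (9, -14), (13, -30), (6, -5), (3, 1)]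
      (by decide) rfl ?_
    simp only [List.isChain_cons_cons, List.isChain_singleton, lift25, and_true]
    push_cast
    refine ⟨?_, ?_, ?_, ?_, ?_, ?_, ?_, ?_⟩ <;> linarith
  rcases le_total b (29/2) with hu | h0
  · refine hits_of_walk b 6 [(14, -30), (13, -25), (11, -16), (10, -12), (12, -20), (16, -40), (9, -8), (6, 1)]
      (by decide) rfl ?_
    simp only [List.isChain_cons_cons, List.isChain_singleton, lift25, and_true]
    push_cast
    refine ⟨?_, ?_, ?_, ?_, ?_, ?_, ?_, ?_⟩ <;> linarith
  rcases le_total b (61/4) with hu | h0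
  · refine hits_of_walk b 6 [(17, -47), (16, -41), (14, -30), (13, -25), (10, -12), (8, -5), (12, -20), (6, 1)]
      (by decide) rfl ?_
    simp only [List.isChain_cons_cons, List.isChain_singleton, lift25, and_true]
    push_cast
    refine ⟨?_, ?_, ?_, ?_, ?_, ?_, ?_, ?_⟩ <;> linarith
  rcases le_total b (31/2) with hu | h0
  · refine hits_of_walk b 3 [(9, -15), (17, -53), (18, -59), (5, -3), (3, 1)]
      (by decide) rfl ?_
    simp only [List.isChain_cons_cons, List.isChain_singleton, lift25, and_true]
    push_cast
    refine ⟨?_, ?_, ?_, ?_, ?_⟩ <;> linarith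
  rcases le_total b (65/4) with hu | h0
  · refine hits_of_walk b 0 [(4, -5), (7, -12), (11, -26), (15, -45), (9, -18), (1, 0), (0, 1)]
      (by decide) rfl ?_
    simp only [List.isChain_cons_cons, List.isChain_singleton, lift25, and_true]
    push_cast
    refine ⟨?_, ?_, ?_, ?_, ?_, ?_, ?_⟩ <;> linarith
  rcases le_total b (67/4) with hu | h0
  · refine hits_of_walk b 0 [(4, -5), (3, -3), (8, -15), (6, -9), (1, 0), (0, 1)]
      (by decide) rfl ?_
    simp only [List.isChain_cons_cons, List.isChain_singleton, lift25, and_true]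
    push_cast
    refine ⟨?_, ?_, ?_, ?_, ?_, ?_⟩ <;> linarith
  rcases le_total b (71/4) with hu | h0
  · refine hits_of_walk b 3 [(7, -9), (8, -12), (10, -19), (13, -32), (9, -15), (12, -27), (4, -1), (3, 1)]
      (by decide) rfl ?_
    simp only [List.isChain_cons_cons, List.isChain_singleton, lift25, and_true]
    push_cast
    refine ⟨?_, ?_, ?_, ?_, ?_, ?_, ?_, ?_⟩ <;> linarith
  rcases le_total b (75/4) with hu | h0
  · refine hits_of_walk b 6 [(10, -13), (11, -17), (13, -26), (16, -42), (12, -21), (15, -36), (7, -2), (6, 1)]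
      (by decide) rfl ?_
    simp only [List.isChain_cons_cons, List.isChain_singleton, lift25, and_true]
    push_cast
    refine ⟨?_, ?_, ?_, ?_, ?_, ?_, ?_, ?_⟩ <;> linarith
  rcases le_total b (137/7) with hu | h0
  · refine hits_of_walk b 7 [(8, -3), (15, -34), (18, -52), (10, -10), (9, -6), (13, -23), (14, -28), (7, 1)]
      (by decide) rfl ?_
    simp only [List.isChain_cons_cons, List.isChain_singleton, lift25, and_true]
    push_cast
    refine ⟨?_, ?_, ?_, ?_, ?_, ?_, ?_, ?_⟩ <;> linarith
  rcases le_total b (101/5) with hu | h0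
  · refine hits_of_walk b 2 [(7, -11), (12, -30), (17, -57), (15, -45), (11, -25), (2, 1)]
      (by decide) rfl ?_
    simp only [List.isChain_cons_cons, List.isChain_singleton, lift25, and_true]
    push_cast
    refine ⟨?_, ?_, ?_, ?_, ?_, ?_⟩ <;> linarith
  rcases le_total b (144/7) with hu | h0
  · refine hits_of_walk b 0 [(10, -24), (11, -28), (18, -66), (6, -10), (4, -5), (0, 1)]
      (by decide) rfl ?_
    simp only [List.isChain_cons_cons, List.isChain_singleton, lift25, and_true]
    push_cast
    refine ⟨?_, ?_, ?_, ?_, ?_, ?_⟩ <;> linarith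
  rcases le_total b (43/2) with hu | h0
  · refine hits_of_walk b 2 [(10, -22), (9, -18), (7, -11), (6, -8), (8, -14), (12, -30), (5, -5), (2, 1)]
      (by decide) rfl ?_
    simp only [List.isChain_cons_cons, List.isChain_singleton, lift25, and_true]
    push_cast
    refine ⟨?_, ?_, ?_, ?_, ?_, ?_, ?_, ?_⟩ <;> linarith
  rcases le_total b (45/2) with hu | h0
  · refine hits_of_walk b 5 [(13, -30), (12, -25), (10, -16), (9, -12), (11, -20), (15, -40), (8, -8), (5, 1)]
      (by decide) rfl ?_
    simp only [List.isChain_cons_cons, List.isChain_singleton, lift25, and_true]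
    push_cast
    refine ⟨?_, ?_, ?_, ?_, ?_, ?_, ?_, ?_⟩ <;> linarith
  rcases le_total b (47/2) with hu | h0
  · refine hits_of_walk b 8 [(16, -38), (15, -32), (13, -21), (12, -16), (14, -26), (18, -50), (11, -11), (8, 1)]
      (by decide) rfl ?_
    simp only [List.isChain_cons_cons, List.isChain_singleton, lift25, and_true]
    push_cast
    refine ⟨?_, ?_, ?_, ?_, ?_, ?_, ?_, ?_⟩ <;> linarith
  rcases le_total b (97/4) with hu | h0
  · refine hits_of_walk b 0 [(1, -1), (3, -4), (6, -11), (10, -25), (14, -44), (8, -17), (0, 1)]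
      (by decide) rfl ?_
    simp only [List.isChain_cons_cons, List.isChain_singleton, lift25, and_true]
    push_cast
    refine ⟨?_, ?_, ?_, ?_, ?_, ?_, ?_⟩ <;> linarith
  rcases le_total b (49/2) with hu | h0
  · refine hits_of_walk b 0 [(1, -1), (3, -4), (2, -2), (7, -14), (5, -8), (0, 1)]
      (by decide) rfl ?_
    simp only [List.isChain_cons_cons, List.isChain_singleton, lift25, and_true]
    push_cast
    refine ⟨?_, ?_, ?_, ?_, ?_, ?_⟩ <;> linarith
  refine hits_of_walk b 1 [(11, -29), (3, -3), (2, -1), (7, -13), (5, -7), (1, 1)]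
    (by decide) rfl ?_
  simp only [List.isChain_cons_cons, List.isChain_singleton, lift25, and_true]
  push_cast
  refine ⟨?_, ?_, ?_, ?_, ?_, ?_⟩ <;> linarith

theorem hits_all (b : ℝ) : Hits b := by
  have h1 := Int.floor_le (b / 25)
  have h2 := Int.lt_floor_add_one (b / 25)
  have h := hits_of_mem_Icc (b - 25 * ⌊b / 25⌋) (by linarith) (by linarith)
  intro c
  obtain ⟨k, hk, z, hz0, hz6⟩ := h c
  refine ⟨k, hk, z - ⌊b / 25⌋ * k, ?_, ?_⟩
  · push_cast
    linarith
  · push_cast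
    linarith

/-- The parallelogram law for the two pairs of opposite vertices. -/
theorem norm_sq_add_sub_of_add_eq_add {E : Type*} [NormedAddCommGroup E] [InnerProductSpace ℝ E]
    {x₁ x₂ x₃ x₄ : E} (h : x₁ + x₂ = x₃ + x₄) :
    ‖x₁‖ ^ 2 + ‖x₂‖ ^ 2 - ‖x₃‖ ^ 2 - ‖x₄‖ ^ 2 = (‖x₁ - x₂‖ ^ 2 - ‖x₃ - x₄‖ ^ 2) / 2 := by
  have h1 := parallelogram_law_with_norm ℝ x₁ x₂
  have h2 := parallelogram_law_with_norm ℝ x₃ x₄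
  rw [h] at h1
  linarith


/-- E^n ↛ (P_3, ℓ_19): there is a red/blue coloring of n-dimensional Euclidean
space such that no (possibly degenerate) parallelogram x₁, x₂, x₃, x₄ with
x₁ + x₂ = x₃ + x₄ and (‖x₁ − x₂‖² − ‖x₃ − x₄‖²)/2 = 3 is entirely red, and
no congruent copy of ℓ_19 is entirely blue. -/
theorem euclidean_not_arrow_P3_l19 (n : ℕ) (hn : 0 < n) :
    ∃ red : EuclideanSpace ℝ (Fin n) → Prop,
      (¬ ∃ x₁ x₂ x₃ x₄ : EuclideanSpace ℝ (Fin n),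
        x₁ + x₂ = x₃ + x₄ ∧
        (‖x₁ - x₂‖ ^ 2 - ‖x₃ - x₄‖ ^ 2) / 2 = 3 ∧
        red x₁ ∧ red x₂ ∧ red x₃ ∧ red x₄) ∧
      (¬ ∃ (x v : EuclideanSpace ℝ (Fin n)), ‖v‖ = 1 ∧
        ∀ k : ℕ, k < 19 → ¬ red (x + (k : ℝ) • v)) := by
  refine ⟨fun x => ∃ z : ℤ, 0 ≤ 4 * ‖x‖ ^ 2 + 25 * (z : ℝ) ∧ 4 * ‖x‖ ^ 2 + 25 * (z : ℝ) < 6, ?_, ?_⟩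
  · rintro ⟨x₁, x₂, x₃, x₄, hsum, hγ, ⟨z₁, l₁, u₁⟩, ⟨z₂, l₂, u₂⟩, ⟨z₃, l₃, u₃⟩, ⟨z₄, l₄, u₄⟩⟩
    rw [← norm_sq_add_sub_of_add_eq_add hsum] at hγ
    -- `12 + 25 w` lies in `(-12, 12)` for the integer `w = z₁ + z₂ - z₃ - z₄`.
    have h1 : (-24 : ℝ) < ((25 * (z₁ + z₂ - z₃ - z₄) : ℤ) : ℝ) := by
      push_cast
      linarith
    have h2 : ((25 * (z₁ + z₂ - z₃ - z₄) : ℤ) : ℝ) < 0 := by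
      push_cast
      linarith
    have h1' : (-24 : ℤ) < 25 * (z₁ + z₂ - z₃ - z₄) := by exact_mod_cast h1
    have h2' : 25 * (z₁ + z₂ - z₃ - z₄) < (0 : ℤ) := by exact_mod_cast h2
    omega
  · rintro ⟨x, v, hv, hblue⟩
    obtain ⟨k, hk, z, hz0, hz6⟩ := hits_all (8 * inner ℝ x v) (4 * ‖x‖ ^ 2)
    have key : ‖x + (k : ℝ) • v‖ ^ 2 = ‖x‖ ^ 2 + 2 * (k * inner ℝ x v) + (k : ℝ) ^ 2 := by
      rw [norm_add_sq_real, inner_smul_right, norm_smul, hv, mul_one, Real.norm_eq_abs, sq_abs]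
    refine hblue k hk ⟨z, ?_, ?_⟩
    · rw [key]
      linarith
    · rw [key]
      linarith
end

section
/- For every positive integer n, there exists a red/blue coloring of n-dimensional Euclidean space E^n such that there are no four red points x_1, x_2, x_3, x_4 with x_1 + x_2 = x_3 + x_4 and (‖x_1 − x_2‖² − ‖x_3 − x_4‖²)/2 = 4, and there is no blue congruent copy of ℓ_21 (i.e., E^n ↛ (P_4, ℓ_21); note ℓ_4 ∈ P_4 as a degenerate parallelogram). -/
/-!
For `x₁ + x₂ = x₃ + x₄` the parallelogram law gives
`‖x₁‖² + ‖x₂‖² - ‖x₃‖² - ‖x₄‖² = (‖x₁ - x₂‖² - ‖x₃ - x₄‖²) / 2`. Put `α = 11/29` and colour `x` red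
when the fractional part of `α‖x‖²` is less than `7/29`.

If `x₁, …, x₄` are red, the left-hand side times `α` lies within distance `< 14/29` of an integer,
whereas `4α = 44/29` is at distance exactly `14/29` from the nearest integer. So no member of `P_4`
is red.

On a unit-step line, `α‖x + k v‖² = α k² + b k + c` with `b, c` real. Among `0 ≤ k < 21` take `k`
minimizing the fractional part. If this minimum were at least `7/29`, an index `l` whose value is,
modulo 1, smaller by some amount in `(0, 7/29]` would contradict minimality
(`exists_fract_lt`). Such an `l` exists for all `b` and `k` (`exists_step`): the difference of the
two values is `(k - l) (α (k + l) + b)`, and after rounding `b` down to a multiple of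
`1/232 = 1/(8·29)` the claim becomes a finite check modulo 232 that leaves room for the rounding
error (`step_table`).
-/

/-- Decides the inequalities of `step_table` for given `J, k, l`. The sign of `k - l` is split off so
that only natural numbers occur, which the kernel evaluates quickly; for `k < l` the residue of the
negated product is tested, which reflects the bounds `1, 56` to `176, 231`. -/
def stepHit (J k l : ℕ) : Bool :=
  bif Nat.ble l k then
    Nat.ble 1 ((k - l) * (88 * (k + l) + J) % 232) &&
      Nat.ble ((k - l) * (88 * (k + l) + J) % 232 + (k - l)) 56
  else
    Nat.ble 176 ((l - k) * (88 * (k + l) + J) % 232) &&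
      Nat.ble ((l - k) * (88 * (k + l) + J) % 232 + (l - k)) 231

lemma stepHit_all : ((List.range 232).all fun J => (List.range 21).all fun k =>
    (List.range 21).any fun l => stepHit J k l) = true := by
  decide +kernel

/-- The finite check, in units of `1/232`: `88/232 = 11/29`, `56/232 = 7/29`, and `J` is the rounded
linear coefficient. Rounding changes the difference by an amount between `0` and `k - l`, which is
why the bounds are required of both `N` and `N + d`. -/
lemma step_table (J k : ℕ) (hJ : J < 232) (hk : k < 21) : ∃ l : ℕ, l < 21 ∧
    (let d : ℤ := (k : ℤ) - (l : ℤ)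
    let N : ℤ := (d * (88 * ((k : ℤ) + (l : ℤ)) + (J : ℤ))) % 232
    (1 ≤ N ∧ 1 ≤ N + d) ∧ (N ≤ 56 ∧ N + d ≤ 56)) := by
  have h := stepHit_all
  simp only [List.all_eq_true, List.any_eq_true, List.mem_range] at h
  obtain ⟨l, hl, h⟩ := h J hJ k hk
  refine ⟨l, hl, ?_⟩
  intro d N
  rcases Nat.le_total l k with hlk | hlk
  · rw [stepHit, Nat.ble_eq_true_of_le hlk, cond_true, Bool.and_eq_true, Nat.ble_eq,
      Nat.ble_eq] at h
    have hN : N = (((k - l) * (88 * (k + l) + J) % 232 : ℕ) : ℤ) := by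
      simp only [N, d]; push_cast [Nat.cast_sub hlk]; rfl
    omega
  · rcases hlk.eq_or_lt with rfl | hlt
    · simp [stepHit] at h
    have hb : Nat.ble l k = false := by
      rw [← Bool.not_eq_true, Nat.ble_eq]; omega
    rw [stepHit, hb, cond_false, Bool.and_eq_true, Nat.ble_eq, Nat.ble_eq] at h
    have hN : N = (-(((l - k) * (88 * (k + l) + J) : ℕ) : ℤ)) % 232 := by
      simp only [N, d]; push_cast [Nat.cast_sub hlk]; congr 1; ring
    omega

/-- Every value of the quadratic sequence has, modulo 1, another value at most `7/29` below it. -/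
lemma exists_step (b : ℝ) (k : ℕ) (hk : k < 21) :
    ∃ l : ℕ, l < 21 ∧ ∃ m : ℤ,
      0 < (11 / 29 * (k : ℝ) ^ 2 + b * k) - (11 / 29 * (l : ℝ) ^ 2 + b * l) - m ∧
      (11 / 29 * (k : ℝ) ^ 2 + b * k) - (11 / 29 * (l : ℝ) ^ 2 + b * l) - m ≤ 7 / 29 := by
  set j : ℤ := ⌊232 * b⌋ with hj
  have hθ0 : 0 ≤ 232 * b - j := Int.fract_nonneg (232 * b)
  have hθ1 : 232 * b - j < 1 := Int.fract_lt_one (232 * b)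
  have hJ0 : 0 ≤ j % 232 := Int.emod_nonneg _ (by norm_num)
  have hJ1 : j % 232 < 232 := Int.emod_lt_of_pos _ (by norm_num)
  obtain ⟨J, hJ⟩ := Int.eq_ofNat_of_zero_le hJ0
  obtain ⟨l, hl21, hl⟩ := step_table J k (by omega) hk
  dsimp only at hl
  set d : ℤ := (k : ℤ) - (l : ℤ) with hd
  set M : ℤ := d * (88 * ((k : ℤ) + (l : ℤ)) + (J : ℤ)) with hM
  obtain ⟨⟨h1, h2⟩, h3, h4⟩ := hl
  have hdiv : M % 232 + 232 * (M / 232) = M := Int.emod_add_mul_ediv M 232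
  have hjdiv : (J : ℤ) + 232 * (j / 232) = j := by
    rw [← hJ]; exact Int.emod_add_mul_ediv j 232
  generalize M % 232 = N at *
  refine ⟨l, hl21, M / 232 + d * (j / 232), ?_⟩
  generalize M / 232 = p at *
  generalize j / 232 = t at *
  clear_value j
  have hjR : (J : ℝ) + 232 * t = j := by exact_mod_cast hjdiv
  have hdR : (d : ℝ) = k - l := by rw [hd]; push_cast; ring
  have hNR : (N : ℝ) + 232 * p = d * (88 * ((k : ℝ) + l) + J) := by
    have : N + 232 * p = d * (88 * ((k : ℤ) + l) + J) := by rw [hdiv]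
    exact_mod_cast this
  have key : (11 / 29 * (k : ℝ) ^ 2 + b * k) - (11 / 29 * (l : ℝ) ^ 2 + b * l)
      - ((p + d * t : ℤ) : ℝ) = (N + d * (232 * b - j)) / 232 := by
    push_cast
    rw [← hjR]
    have : (N : ℝ) = d * (88 * ((k : ℝ) + l) + J) - 232 * p := by linarith
    rw [this, hdR]
    ring
  rw [key]
  have g1 : (1 : ℝ) ≤ N := by exact_mod_cast h1
  have g2 : (1 : ℝ) ≤ N + d := by exact_mod_cast h2
  have g3 : (N : ℝ) ≤ 56 := by exact_mod_cast h3
  have g4 : (N : ℝ) + d ≤ 56 := by exact_mod_cast h4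
  -- `N + dθ` is a convex combination of `N` and `N + d`.
  have e1 : (1 : ℝ) ≤ N + d * (232 * b - j) := by nlinarith
  have e2 : (N : ℝ) + d * (232 * b - j) ≤ 56 := by nlinarith
  constructor <;> linarith

lemma exists_fract_lt (b c : ℝ) :
    ∃ k : ℕ, k < 21 ∧ Int.fract (11 / 29 * (k : ℝ) ^ 2 + b * k + c) < 7 / 29 := by
  obtain ⟨k, hk, hmin⟩ := Finset.exists_min_image (Finset.range 21)
    (fun k : ℕ => Int.fract (11 / 29 * (k : ℝ) ^ 2 + b * k + c)) ⟨0, by simp⟩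
  rw [Finset.mem_range] at hk
  refine ⟨k, hk, ?_⟩
  by_contra! hge
  obtain ⟨l, hl, m, hm0, hm1⟩ := exists_step b k hk
  have hle := hmin l (Finset.mem_range.2 hl)
  have hlt1 := Int.fract_lt_one (11 / 29 * (k : ℝ) ^ 2 + b * k + c)
  have hfl := Int.self_sub_floor (11 / 29 * (k : ℝ) ^ 2 + b * k + c)
  have hfr : Int.fract (11 / 29 * (l : ℝ) ^ 2 + b * l + c) =
      Int.fract (11 / 29 * (k : ℝ) ^ 2 + b * k + c) -
        ((11 / 29 * (k : ℝ) ^ 2 + b * k) - (11 / 29 * (l : ℝ) ^ 2 + b * l) - m) := by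
    rw [Int.fract_eq_iff]
    refine ⟨by linarith, by linarith, ⌊11 / 29 * (k : ℝ) ^ 2 + b * k + c⌋ - m, ?_⟩
    push_cast
    linarith
  linarith

/-- `4 · 11/29` is too far from the integers to be `r₁ + r₂ - r₃ - r₄` modulo 1 with all `rᵢ` in
`[0, 7/29)`. -/
lemma no_red_solution (a b c d : ℝ) (h : a + b - c - d = 4)
    (ha : Int.fract (11 / 29 * a) < 7 / 29) (hb : Int.fract (11 / 29 * b) < 7 / 29)
    (hc : Int.fract (11 / 29 * c) < 7 / 29) (hd : Int.fract (11 / 29 * d) < 7 / 29) : False := by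
  have ha0 := Int.fract_nonneg (11 / 29 * a)
  have hb0 := Int.fract_nonneg (11 / 29 * b)
  have hc0 := Int.fract_nonneg (11 / 29 * c)
  have hd0 := Int.fract_nonneg (11 / 29 * d)
  rw [← Int.self_sub_floor] at *
  generalize ⌊11 / 29 * a⌋ = p at *
  generalize ⌊11 / 29 * b⌋ = q at *
  generalize ⌊11 / 29 * c⌋ = r at *
  generalize ⌊11 / 29 * d⌋ = s at *
  have h1 : (1 : ℝ) < ((p + q - r - s : ℤ) : ℝ) := by push_cast; linarith
  have h2 : ((p + q - r - s : ℤ) : ℝ) < 2 := by push_cast; linarith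
  have h1' : 1 < p + q - r - s := by exact_mod_cast h1
  have h2' : p + q - r - s < 2 := by exact_mod_cast h2
  omega

/-- E^n ↛ (P_4, ℓ_21): there is a red/blue coloring of n-dimensional Euclidean
space such that no (possibly degenerate) parallelogram x₁, x₂, x₃, x₄ with
x₁ + x₂ = x₃ + x₄ and (‖x₁ − x₂‖² − ‖x₃ − x₄‖²)/2 = 4 is entirely red, and
no congruent copy of ℓ_21 is entirely blue. -/
theorem euclidean_not_arrow_P4_l21 (n : ℕ) (hn : 0 < n) :
    ∃ red : EuclideanSpace ℝ (Fin n) → Prop,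
      (¬ ∃ x₁ x₂ x₃ x₄ : EuclideanSpace ℝ (Fin n),
        x₁ + x₂ = x₃ + x₄ ∧
        (‖x₁ - x₂‖ ^ 2 - ‖x₃ - x₄‖ ^ 2) / 2 = 4 ∧
        red x₁ ∧ red x₂ ∧ red x₃ ∧ red x₄) ∧
      (¬ ∃ (x v : EuclideanSpace ℝ (Fin n)), ‖v‖ = 1 ∧
        ∀ k : ℕ, k < 21 → ¬ red (x + (k : ℝ) • v)) := by
  refine ⟨fun x => Int.fract (11 / 29 * ‖x‖ ^ 2) < 7 / 29, ?_, ?_⟩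
  · rintro ⟨x₁, x₂, x₃, x₄, hsum, hdiag, h1, h2, h3, h4⟩
    refine no_red_solution _ _ _ _ ?_ h1 h2 h3 h4
    have e1 := parallelogram_law_with_norm ℝ x₁ x₂
    have e2 := parallelogram_law_with_norm ℝ x₃ x₄
    rw [hsum] at e1
    nlinarith
  · rintro ⟨x, v, hv, hblue⟩
    obtain ⟨k, hk, hred⟩ :=
      exists_fract_lt (11 / 29 * (2 * inner ℝ x v)) (11 / 29 * ‖x‖ ^ 2)
    apply hblue k hk
    have hnorm : 11 / 29 * ‖x + (k : ℝ) • v‖ ^ 2 = 11 / 29 * (k : ℝ) ^ 2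
        + 11 / 29 * (2 * inner ℝ x v) * k + 11 / 29 * ‖x‖ ^ 2 := by
      rw [norm_add_sq_real, inner_smul_right, norm_smul, hv, mul_one, Real.norm_eq_abs, sq_abs]
      ring
    rw [hnorm]
    exact hred
end
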